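/- arXiv:1810.04385 — 4 statements merged into one kernel-verified Lean document; each statement's English description precedes it below -/
import Mathlib

section
/- Fix N, K ≥ 1, channel gains h : Fin N → Fin K → ℝ with h i k ≥ 0, noise power σ² > 0, weights w : Fin K → ℝ with w k ≥ 0, auxiliary parameters α : Fin K → ℝ with α k ≥ 0, β : Fin K → ℝ, and circuit powers p^c : Fin K → ℝ with p^c k ≥ 0. For each k define f_k : (Fin N → ℝ) × ℝ → ℝ by f_k(s, τ) = w k · τ · ln(1 + (Σ_i h i k · s i)/(σ² · τ)) − β k · (Σ_i s i + τ · p^c k) for τ > 0, and f_k(s, 0) = −β k · Σ_i s i. Then the function (s, τ) ↦ Σ_k α k · f_k(s(·, k), τ k), where s : Fin N → Fin K → ℝ and τ : Fin K → ℝ, is concave on the convex set { (s, τ) : s i k ≥ 0 for all i, k and 0 ≤ τ k ≤ 1 for all k }. -/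
/-!
Each user contributes `w * g(∑ h s, τ) - β * (∑ s + τ * pc)`, where
`g(x, t) = t * log (1 + x / (σ2 * t))` is the perspective of `y ↦ log (1 + y / σ2)`. With Lean's
convention `x / 0 = 0` this formula also covers `τ = 0`, so the case split disappears.
The bound `log z ≤ z - 1` makes `g` the pointwise infimum over `c > 0` of the functions
`t * log c + (t + x / σ2) / c - t`, which are linear in `(x, t)` (`perspective_log_le`); hence `g` is
concave (`perspective_log_concave`). The rest of the objective is linear in `(s, τ)`.
-/

open Real

/-- The tangent bound for the perspective of the logarithm, with slope parameter `c`; it includes the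
boundary case `t = 0`, where the left side is `0`. -/
lemma perspective_log_le {σ2 x t c : ℝ} (hσ : 0 < σ2) (hx : 0 ≤ x) (ht : 0 ≤ t) (hc : 0 < c) :
    t * Real.log (1 + x / (σ2 * t)) ≤ t * Real.log c + (t + x / σ2) / c - t := by
  rcases ht.eq_or_lt with rfl | ht
  · simp only [zero_mul, zero_add, sub_zero]
    positivity
  · have hA : 0 < 1 + x / (σ2 * t) := by positivity
    have h1 := Real.log_le_sub_one_of_pos (div_pos hA hc)
    rw [Real.log_div hA.ne' hc.ne'] at h1
    have h2 := mul_le_mul_of_nonneg_left h1 ht.le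
    have h3 : t * ((1 + x / (σ2 * t)) / c - 1) = (t + x / σ2) / c - t := by
      field_simp
    linarith

lemma perspective_log_concave {σ2 x y t u a b : ℝ} (hσ : 0 < σ2) (hx : 0 ≤ x) (hy : 0 ≤ y)
    (ht : 0 ≤ t) (hu : 0 ≤ u) (ha : 0 ≤ a) (hb : 0 ≤ b) :
    a * (t * Real.log (1 + x / (σ2 * t))) + b * (u * Real.log (1 + y / (σ2 * u))) ≤
      (a * t + b * u) * Real.log (1 + (a * x + b * y) / (σ2 * (a * t + b * u))) := by
  have hat := mul_nonneg ha ht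
  have hbu := mul_nonneg hb hu
  rcases (add_nonneg hat hbu).eq_or_lt with hT | hT
  · have h1 : a * t = 0 := by linarith
    have h2 : b * u = 0 := by linarith
    simp only [← mul_assoc, h1, h2]
    simp
  · -- The tangent bound is an equality for this value of the parameter.
    set c := 1 + (a * x + b * y) / (σ2 * (a * t + b * u)) with hc_def
    have hc : 0 < c := by positivity
    have h1 := mul_le_mul_of_nonneg_left (perspective_log_le hσ hx ht hc) ha
    have h2 := mul_le_mul_of_nonneg_left (perspective_log_le hσ hy hu hc) hb
    have h3 : a * ((t + x / σ2) / c) + b * ((u + y / σ2) / c) = a * t + b * u := by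
      have h4 : a * (t + x / σ2) + b * (u + y / σ2) = (a * t + b * u) * c := by
        rw [hc_def]
        field_simp
        ring
      rw [← mul_div_assoc, ← mul_div_assoc, ← add_div, h4, mul_div_cancel_right₀ _ hc.ne']
    linarith

/-- Lemma 2 of the paper: the objective of the parameterized subtractive-form
UC-EE problem is jointly concave in the energy variables `s` and time
allocations `τ`. -/
theorem subtractive_objective_concave
    (N K : ℕ) (hN : 1 ≤ N) (hK : 1 ≤ K)
    (h : Fin N → Fin K → ℝ) (hh : ∀ i k, 0 ≤ h i k)
    (σ2 : ℝ) (hσ : 0 < σ2)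
    (w : Fin K → ℝ) (hw : ∀ k, 0 ≤ w k)
    (α : Fin K → ℝ) (hα : ∀ k, 0 ≤ α k)
    (β : Fin K → ℝ)
    (pc : Fin K → ℝ) (hpc : ∀ k, 0 ≤ pc k) :
    ConcaveOn ℝ
      {p : (Fin N → Fin K → ℝ) × (Fin K → ℝ) |
        (∀ i k, 0 ≤ p.1 i k) ∧ ∀ k, 0 ≤ p.2 k ∧ p.2 k ≤ 1}
      (fun p => ∑ k,
        α k *
          (if 0 < p.2 k then
            w k * p.2 k * Real.log (1 + (∑ i, h i k * p.1 i k) / (σ2 * p.2 k)) -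
              β k * ((∑ i, p.1 i k) + p.2 k * pc k)
          else -(β k * ∑ i, p.1 i k))) := by
  refine ⟨?_, ?_⟩
  · rintro p ⟨hp1, hp2⟩ q ⟨hq1, hq2⟩ a b ha hb hab
    refine ⟨fun i k => ?_, fun k => ⟨?_, ?_⟩⟩
    · exact add_nonneg (mul_nonneg ha (hp1 i k)) (mul_nonneg hb (hq1 i k))
    · exact add_nonneg (mul_nonneg ha (hp2 k).1) (mul_nonneg hb (hq2 k).1)
    · have h1 := mul_le_mul_of_nonneg_left (hp2 k).2 ha
      have h2 := mul_le_mul_of_nonneg_left (hq2 k).2 hb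
      change a * p.2 k + b * q.2 k ≤ 1
      linarith
  · rintro p ⟨hp1, hp2⟩ q ⟨hq1, hq2⟩ a b ha hb hab
    -- At `t = 0` both branches agree because the logarithmic term carries the factor `t`.
    have key : ∀ (k : Fin K) (t L S : ℝ), 0 ≤ t →
        (if 0 < t then w k * t * L - β k * (S + t * pc k) else -(β k * S)) =
          w k * (t * L) - β k * (S + t * pc k) := by
      intro k t L S ht
      rcases ht.eq_or_lt with rfl | ht
      · simp
      · rw [if_pos ht, mul_assoc]
    simp only [smul_eq_mul, Finset.mul_sum (s := (Finset.univ : Finset (Fin K)))]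
    rw [← Finset.sum_add_distrib]
    refine Finset.sum_le_sum fun k _ => ?_
    have e2 : (a • p + b • q).2 k = a * p.2 k + b * q.2 k := rfl
    have e1 : ∀ i, (a • p + b • q).1 i k = a * p.1 i k + b * q.1 i k := fun i => rfl
    have hT : 0 ≤ a * p.2 k + b * q.2 k :=
      add_nonneg (mul_nonneg ha (hp2 k).1) (mul_nonneg hb (hq2 k).1)
    simp only [e1, e2]
    rw [key k _ _ _ (hp2 k).1, key k _ _ _ (hq2 k).1, key k _ _ _ hT]
    have s1 : ∑ i, (a * p.1 i k + b * q.1 i k) = a * ∑ i, p.1 i k + b * ∑ i, q.1 i k := by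
      rw [Finset.sum_add_distrib, Finset.mul_sum, Finset.mul_sum]
    have s2 : ∑ i, h i k * (a * p.1 i k + b * q.1 i k) =
        a * ∑ i, h i k * p.1 i k + b * ∑ i, h i k * q.1 i k := by
      rw [Finset.mul_sum, Finset.mul_sum, ← Finset.sum_add_distrib]
      exact Finset.sum_congr rfl fun i _ => by ring
    rw [s1, s2]
    have hx : 0 ≤ ∑ i, h i k * p.1 i k :=
      Finset.sum_nonneg fun i _ => mul_nonneg (hh i k) (hp1 i k)
    have hy : 0 ≤ ∑ i, h i k * q.1 i k :=
      Finset.sum_nonneg fun i _ => mul_nonneg (hh i k) (hq1 i k)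
    have main := mul_le_mul_of_nonneg_left
      (perspective_log_concave hσ hx hy (hp2 k).1 (hq2 k).1 ha hb) (mul_nonneg (hα k) (hw k))
    linarith
end

section
/- For every S > 0, σ² > 0, and c > 0, there exists a unique τ > 0 such that ln(1 + S/(σ² · τ)) − S/(σ² · τ + S) = c. -/
/-!
In the variable `u = 1 + S / (σ2 * τ)`, which maps `τ > 0` bijectively onto `u > 1`, the equation
reads `log u + 1 / u - 1 = c`. The left-hand side vanishes at `u = 1`, is strictly increasing on
`[1, ∞)` (`log_add_inv_lt`), and exceeds `c` at `u = exp (c + 1)`, so the intermediate value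
theorem gives a root `u > 1` and monotonicity makes it unique.
-/

/-- Strict monotonicity of `u ↦ log u + u⁻¹` on `[1, ∞)`: `log (u / v) < u / v - 1` gives
`log v - log u > (v - u) / v ≥ (v - u) / (u * v) = u⁻¹ - v⁻¹`. -/
lemma log_add_inv_lt {u v : ℝ} (hu : 1 ≤ u) (huv : u < v) :
    Real.log u + u⁻¹ < Real.log v + v⁻¹ := by
  have hu0 : 0 < u := by linarith
  have hv0 : 0 < v := by linarith
  have hlog : Real.log (u / v) < u / v - 1 :=
    Real.log_lt_sub_one_of_pos (by positivity) (by rw [Ne, div_eq_one_iff_eq hv0.ne']; exact huv.ne)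
  rw [Real.log_div hu0.ne' hv0.ne'] at hlog
  have hdiff : 1 - u / v - (u⁻¹ - v⁻¹) = (v - u) * (u - 1) / (u * v) := by
    field_simp
  have hnonneg : 0 ≤ (v - u) * (u - 1) / (u * v) :=
    div_nonneg (mul_nonneg (by linarith) (by linarith)) (by positivity)
  linarith

lemma exists_log_add_inv_eq {c : ℝ} (hc : 0 < c) :
    ∃ u : ℝ, 1 < u ∧ Real.log u + u⁻¹ - 1 = c := by
  have hexp : 1 ≤ Real.exp (c + 1) := Real.one_le_exp (by linarith)
  have hcont : ContinuousOn (fun u : ℝ => Real.log u + u⁻¹ - 1) (Set.Icc 1 (Real.exp (c + 1))) := by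
    have hne : ∀ u ∈ Set.Icc 1 (Real.exp (c + 1)), u ≠ 0 := fun u hu => by linarith [hu.1]
    exact ((continuousOn_id.log hne).add (continuousOn_id.inv₀ hne)).sub continuousOn_const
  have hinv : 0 < (Real.exp (c + 1))⁻¹ := by positivity
  obtain ⟨u, hu, huc⟩ := intermediate_value_Icc hexp hcont
    (show c ∈ Set.Icc _ _ from ⟨by simpa using hc.le, by simp only [Real.log_exp]; linarith⟩)
  refine ⟨u, lt_of_le_of_ne hu.1 ?_, huc⟩
  rintro rfl
  simp at huc
  linarith

/-- The change of variables `u = 1 + S / (σ2 * τ)`. -/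
lemma stationary_lhs_eq {S σ2 τ : ℝ} (hS : 0 < S) (hσ : 0 < σ2) (hτ : 0 < τ) :
    Real.log (1 + S / (σ2 * τ)) - S / (σ2 * τ + S) =
      Real.log (1 + S / (σ2 * τ)) + (1 + S / (σ2 * τ))⁻¹ - 1 := by
  have h : S / (σ2 * τ + S) = 1 - (1 + S / (σ2 * τ))⁻¹ := by
    have h1 : 0 < σ2 * τ := by positivity
    have h2 : 1 + S / (σ2 * τ) = (σ2 * τ + S) / (σ2 * τ) := by field_simp
    rw [h2, inv_div, eq_sub_iff_add_eq, ← add_div, add_comm S]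
    exact div_self (by positivity)
  rw [h]
  ring

/-- Existence and uniqueness of the stationary point of the Lagrangian in the
time variable (eqs. (27)–(28) of the paper). -/
theorem stationary_time_exists_unique (S σ2 c : ℝ) (hS : 0 < S) (hσ : 0 < σ2)
    (hc : 0 < c) :
    ∃! τ : ℝ, 0 < τ ∧
      Real.log (1 + S / (σ2 * τ)) - S / (σ2 * τ + S) = c := by
  -- The left-hand side is strictly decreasing in `τ`.
  have hanti : ∀ a b : ℝ, 0 < a → a < b →
      Real.log (1 + S / (σ2 * b)) - S / (σ2 * b + S) <
        Real.log (1 + S / (σ2 * a)) - S / (σ2 * a + S) := by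
    intro a b ha hab
    have hb : 0 < b := ha.trans hab
    rw [stationary_lhs_eq hS hσ ha, stationary_lhs_eq hS hσ hb]
    have hlt : S / (σ2 * b) < S / (σ2 * a) := by gcongr
    have hpos : 0 < S / (σ2 * b) := by positivity
    linarith [log_add_inv_lt (u := 1 + S / (σ2 * b)) (v := 1 + S / (σ2 * a))
      (by linarith) (by linarith)]
  obtain ⟨u, hu, huc⟩ := exists_log_add_inv_eq hc
  have hu' : 0 < u - 1 := by linarith
  have hτ : 0 < S / (σ2 * (u - 1)) := by positivity
  have hsub : 1 + S / (σ2 * (S / (σ2 * (u - 1)))) = u := by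
    field_simp
    ring
  have hroot := stationary_lhs_eq hS hσ hτ
  rw [hsub, huc] at hroot
  refine ⟨S / (σ2 * (u - 1)), ⟨hτ, by rw [hsub]; exact hroot⟩, ?_⟩
  rintro t ⟨ht, htc⟩
  rcases lt_trichotomy t (S / (σ2 * (u - 1))) with h | h | h
  · have := hanti _ _ ht h
    rw [hsub] at this
    linarith
  · exact h
  · have := hanti _ _ hτ h
    rw [hsub] at this
    linarith
end

section
/- Let X be a type, F ⊆ X nonempty, and N, D : X → ℝ with D x ≥ d for every x ∈ F, where d > 0. Let q₁ < q₂ be real numbers, suppose the set { N x − q₁ · D x : x ∈ F } is bounded above, and suppose x₂ ∈ F attains the supremum T(q₂) = sSup { N x − q₂ · D x : x ∈ F }. Then T(q₂) < T(q₁), where T(q₁) = sSup { N x − q₁ · D x : x ∈ F }. -/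
/-- Strict monotonicity of the Dinkelbach value function `T(q)`: if `q₁ < q₂`
and the supremum defining `T(q₂)` is attained, then `T(q₂) < T(q₁)`. -/
theorem dinkelbach_T_strict_anti {X : Type*} (F : Set X) (hF : F.Nonempty)
    (N D : X → ℝ) (d : ℝ) (hd : 0 < d) (hD : ∀ x ∈ F, d ≤ D x)
    (q₁ q₂ : ℝ) (hq : q₁ < q₂)
    (hbdd : BddAbove {y : ℝ | ∃ x ∈ F, y = N x - q₁ * D x})
    (x₂ : X) (hx₂ : x₂ ∈ F)
    (hattain : N x₂ - q₂ * D x₂ = sSup {y : ℝ | ∃ x ∈ F, y = N x - q₂ * D x}) :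
    sSup {y : ℝ | ∃ x ∈ F, y = N x - q₂ * D x} <
      sSup {y : ℝ | ∃ x ∈ F, y = N x - q₁ * D x} := by
  -- The maximizer `x₂` for `q₂` is feasible for `q₁`, with a strictly larger value as `D x₂ > 0`.
  have hpos : 0 < D x₂ := hd.trans_le (hD x₂ hx₂)
  rw [← hattain]
  calc N x₂ - q₂ * D x₂ < N x₂ - q₁ * D x₂ :=
        sub_lt_sub_left (mul_lt_mul_of_pos_right hq hpos) _
    _ ≤ sSup {y : ℝ | ∃ x ∈ F, y = N x - q₁ * D x} := le_csSup hbdd ⟨x₂, hx₂, rfl⟩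
end

section
/- Fix N ≥ 1, channel gains h : Fin N → ℝ with h i ≥ 0, noise power σ² > 0, w ≥ 0, β ∈ ℝ, and p^c ≥ 0. Define f : (Fin N → ℝ) × ℝ → ℝ by f(s, τ) = w · τ · ln(1 + (Σ_i h i · s i)/(σ² · τ)) − β · (Σ_i s i + τ · p^c) for τ > 0, and f(s, 0) = −β · Σ_i s i. Then for every θ ∈ (0, 1), every τ̇ > 0, and every ṡ, s̈ : Fin N → ℝ with ṡ i ≥ 0 and s̈ i ≥ 0 for all i, one has f(θ·ṡ + (1−θ)·s̈, θ·τ̇) ≥ θ · f(ṡ, τ̇) + (1−θ) · f(s̈, 0). -/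
/-!
The terms in `β` are linear in `(s, τ)` and agree on both sides, and the boundary point contributes
no logarithmic term. With `A = ∑ h i * ṡ i` and `B = ∑ h i * s̈ i ≥ 0`, the claim is therefore
`w θ τ̇ log (1 + A / (σ² τ̇)) ≤ w θ τ̇ log (1 + (θ A + (1 - θ) B) / (σ² θ τ̇))`, which is monotonicity
of the logarithm.
-/

/-- Case 2 of Appendix B of the paper: the concavity inequality for the
extended per-user objective `f` along segments joining an interior point
`(ṡ, τ̇)` with `τ̇ > 0` to a boundary point `(s̈, 0)`. -/
theorem concavity_boundary_case
    (N : ℕ) (hN : 1 ≤ N) (h : Fin N → ℝ) (hh : ∀ i, 0 ≤ h i)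
    (σ2 : ℝ) (hσ : 0 < σ2) (w : ℝ) (hw : 0 ≤ w) (β : ℝ) (pc : ℝ) (hpc : 0 ≤ pc)
    (f : (Fin N → ℝ) → ℝ → ℝ)
    (hf : ∀ s τ, f s τ =
      if 0 < τ then
        w * τ * Real.log (1 + (∑ i, h i * s i) / (σ2 * τ)) -
          β * ((∑ i, s i) + τ * pc)
      else -(β * ∑ i, s i))
    (θ : ℝ) (hθ : θ ∈ Set.Ioo (0 : ℝ) 1)
    (τdot : ℝ) (hτdot : 0 < τdot)
    (sdot sddot : Fin N → ℝ) (hsdot : ∀ i, 0 ≤ sdot i) (hsddot : ∀ i, 0 ≤ sddot i) :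
    θ * f sdot τdot + (1 - θ) * f sddot 0 ≤
      f (fun i => θ * sdot i + (1 - θ) * sddot i) (θ * τdot) := by
  obtain ⟨hθ0, hθ1⟩ := hθ
  have hτ : 0 < θ * τdot := mul_pos hθ0 hτdot
  have hA : 0 ≤ ∑ i, h i * sdot i := Finset.sum_nonneg fun i _ => mul_nonneg (hh i) (hsdot i)
  have hB : 0 ≤ ∑ i, h i * sddot i := Finset.sum_nonneg fun i _ => mul_nonneg (hh i) (hsddot i)
  have hsum : ∑ i, (θ * sdot i + (1 - θ) * sddot i) =
      θ * ∑ i, sdot i + (1 - θ) * ∑ i, sddot i := by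
    rw [Finset.sum_add_distrib, Finset.mul_sum, Finset.mul_sum]
  have hgain : ∑ i, h i * (θ * sdot i + (1 - θ) * sddot i) =
      θ * ∑ i, h i * sdot i + (1 - θ) * ∑ i, h i * sddot i := by
    rw [Finset.mul_sum, Finset.mul_sum, ← Finset.sum_add_distrib]
    exact Finset.sum_congr rfl fun i _ => by ring
  rw [hf, hf, hf, if_pos hτdot, if_neg (lt_irrefl 0), if_pos hτ, hsum, hgain]
  generalize (∑ i, h i * sdot i) = A at *
  generalize (∑ i, h i * sddot i) = B at *
  -- Dropping the nonnegative contribution of the boundary point leaves the ratio at the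
  -- interior point, because the common factor `θ` cancels.
  have hratio : A / (σ2 * τdot) ≤ (θ * A + (1 - θ) * B) / (σ2 * (θ * τdot)) := by
    have hcancel : A / (σ2 * τdot) = θ * A / (σ2 * (θ * τdot)) := by
      field_simp
    rw [hcancel]
    have : 0 ≤ (1 - θ) * B := mul_nonneg (by linarith) hB
    gcongr
    linarith
  have hpos : 0 < 1 + A / (σ2 * τdot) := by positivity
  have hlog := Real.log_le_log hpos (add_le_add_right hratio 1)
  have hmul := mul_le_mul_of_nonneg_left hlog (mul_nonneg hw hτ.le)
  -- The terms in `β` are linear in `(s, τ)`, so they agree on both sides.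
  linarith
end
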